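/- Let v : ℝ^d → ℝ^d be Lipschitz and uniformly bounded, and let θ : ℝ^d → [0,1] be Lipschitz. Fix x⁰ ∈ ℝ^d. Let y : [0,∞) → ℝ^d be the solution of ẏ = v(y), y(0) = x⁰, and let z : [0,∞) → ℝ^d be the solution of ż = θ(z) v(z), z(0) = x⁰. Then there exists a nondecreasing function γ : [0,∞) → [0,∞) with γ(0) = 0 and γ(t) ≤ t for all t ≥ 0, such that z(t) = y(γ(t)) for all t ≥ 0. In particular, the range {z(t) : t ≥ 0} is contained in the range {y(s) : s ≥ 0}. -/

import Mathlib

open MeasureTheory Set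
open scoped ENNReal NNReal

noncomputable section

/-- The Euclidean space `ℝ^d`. -/
abbrev Euc (d : ℕ) := EuclideanSpace ℝ (Fin d)

lemma aux_cont {d : ℕ} (w : Euc d → Euc d) (hw : Continuous w) (C : ℝ) (hC : ∀ x, ‖w x‖ ≤ C)
    (x0 : Euc d) (y : ℝ → Euc d)
    (hy : ∀ t : ℝ, 0 ≤ t → y t = x0 + ∫ s in (0:ℝ)..t, w (y s)) :
    ContinuousOn y (Ici 0) := by
  have hlip : ∀ S : Set ℝ, S ⊆ Ici 0 →
      (∀ t ∈ S, IntervalIntegrable (fun s => w (y s)) volume 0 t) → ContinuousOn y S := by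
    intro S hS hI
    have : LipschitzOnWith (Real.toNNReal C) y S := by
      apply LipschitzOnWith.of_dist_le_mul
      intro a ha b hb
      rw [dist_eq_norm, hy a (hS ha), hy b (hS hb), add_sub_add_left_eq_sub,
        intervalIntegral.integral_interval_sub_left (hI a ha) (hI b hb), Real.dist_eq]
      refine intervalIntegral.norm_integral_le_of_norm_le_const ?_
      intro x _
      exact (hC _).trans (Real.le_coe_toNNReal C)
    exact this.continuousOn
  set S : Set ℝ := {t | 0 ≤ t ∧ IntervalIntegrable (fun s => w (y s)) volume 0 t} with hSdef
  have hSc : ContinuousOn y S := hlip S (fun t ht => ht.1) (fun t ht => ht.2)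
  have hSo : OrdConnected S := by
    constructor
    intro a ha b hb t ht
    have h0 : 0 ≤ t := ha.1.trans ht.1
    refine ⟨h0, hb.2.mono_set ?_⟩
    rw [uIcc_of_le h0, uIcc_of_le hb.1]
    exact Icc_subset_Icc_right ht.2
  have hSm : MeasurableSet S := hSo.measurableSet
  have hm1 : AEStronglyMeasurable (fun s => w (y s)) (volume.restrict S) :=
    (hw.comp_continuousOn hSc).aestronglyMeasurable hSm
  have hm2 : AEStronglyMeasurable (fun s => w (y s)) (volume.restrict (Ici 0 \ S)) := by
    have : ContinuousOn (fun s => w (y s)) (Ici 0 \ S) := by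
      refine (continuousOn_const (c := w x0)).congr ?_
      intro t ht
      have h0 : (0:ℝ) ≤ t := ht.1
      have : ¬ IntervalIntegrable (fun s => w (y s)) volume 0 t := fun h => ht.2 ⟨h0, h⟩
      simp only
      rw [hy t h0, intervalIntegral.integral_undef this, add_zero]
    exact this.aestronglyMeasurable (measurableSet_Ici.diff hSm)
  have hm : AEStronglyMeasurable (fun s => w (y s)) (volume.restrict (S ∪ (Ici 0 \ S))) :=
    aestronglyMeasurable_union_iff.2 ⟨hm1, hm2⟩
  apply hlip _ subset_rfl
  intro t ht
  rw [intervalIntegrable_iff_integrableOn_Ioc_of_le ht]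
  refine Integrable.of_bound (μ := volume.restrict (Ioc 0 t)) ?_ C ?_
  · refine hm.mono_measure (Measure.restrict_mono ?_ le_rfl)
    intro s hs
    by_cases h : s ∈ S
    · exact Or.inl h
    · exact Or.inr ⟨hs.1.le, h⟩
  · exact Filter.Eventually.of_forall fun x => hC _

lemma aux_ext {d : ℕ} (w : Euc d → Euc d) (hw : Continuous w) (C : ℝ) (hC : ∀ x, ‖w x‖ ≤ C)
    (x0 : Euc d) (y : ℝ → Euc d)
    (hy : ∀ t : ℝ, 0 ≤ t → y t = x0 + ∫ s in (0:ℝ)..t, w (y s)) :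
    ∃ Y : ℝ → Euc d, Y 0 = x0 ∧ (∀ t, 0 ≤ t → Y t = y t) ∧ Continuous Y ∧
      ∀ t, 0 ≤ t → HasDerivAt Y (w (Y t)) t := by
  have hc := aux_cont w hw C hC x0 y hy
  have hg : Continuous (fun t : ℝ => w (y (max t 0))) :=
    hw.comp (hc.comp_continuous (by fun_prop) (fun t => le_max_right t 0))
  have hY : ∀ t, 0 ≤ t → x0 + ∫ s in (0:ℝ)..t, w (y (max s 0)) = y t := by
    intro t ht
    rw [hy t ht]
    congr 1
    apply intervalIntegral.integral_congr
    intro s hs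
    rw [uIcc_of_le ht] at hs
    simp only [max_eq_left hs.1]
  have hd : ∀ t, HasDerivAt (fun t => x0 + ∫ s in (0:ℝ)..t, w (y (max s 0)))
      (w (y (max t 0))) t := fun t =>
    (intervalIntegral.integral_hasDerivAt_right (hg.intervalIntegrable _ _)
      (hg.stronglyMeasurableAtFilter _ _) hg.continuousAt).const_add x0
  refine ⟨fun t => x0 + ∫ s in (0:ℝ)..t, w (y (max s 0)), by simp, hY, ?_, ?_⟩
  · exact continuous_iff_continuousAt.2 fun t => (hd t).continuousAt
  · intro t ht
    have := hd t
    simp only [hY t ht]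
    rwa [max_eq_left ht] at this

/-- Reparametrization lemma: the solution of `ż = θ(z) v(z)` is a time
reparametrization of the solution of `ẏ = v(y)` issued from the same point;
in particular its range is contained in the range of the uncontrolled solution.
Solutions are understood in the Carathéodory (integral) sense. -/
theorem reparametrization_cutoff
    (d : ℕ) (v : Euc d → Euc d) (hvL : ∃ K : ℝ≥0, LipschitzWith K v)
    (hvB : ∃ C : ℝ, ∀ x, ‖v x‖ ≤ C)
    (θ : Euc d → ℝ) (hθL : ∃ K : ℝ≥0, LipschitzWith K θ)
    (hθ01 : ∀ x, θ x ∈ Icc (0:ℝ) 1)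
    (x0 : Euc d) (y z : ℝ → Euc d)
    (hy : ∀ t : ℝ, 0 ≤ t → y t = x0 + ∫ s in (0:ℝ)..t, v (y s))
    (hz : ∀ t : ℝ, 0 ≤ t → z t = x0 + ∫ s in (0:ℝ)..t, θ (z s) • v (z s)) :
    ∃ γ : ℝ → ℝ, MonotoneOn γ (Ici (0:ℝ)) ∧ γ 0 = 0 ∧
      (∀ t : ℝ, 0 ≤ t → 0 ≤ γ t ∧ γ t ≤ t ∧ z t = y (γ t)) ∧
      z '' Ici (0:ℝ) ⊆ y '' Ici (0:ℝ) := by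
  obtain ⟨K, hK⟩ := hvL
  obtain ⟨C, hC⟩ := hvB
  obtain ⟨L, hL⟩ := hθL
  obtain ⟨Y, hY0, hYy, hYc, hYd⟩ := aux_ext v hK.continuous C hC x0 y hy
  obtain ⟨Z, hZ0, hZz, hZc, hZd⟩ := aux_ext (fun x => θ x • v x)
    (hL.continuous.smul hK.continuous) C (fun x => by
      rw [norm_smul, Real.norm_of_nonneg (hθ01 x).1]
      exact (mul_le_of_le_one_left (norm_nonneg _) (hθ01 x).2).trans (hC x)) x0 z hz
  have hg : Continuous (fun t => θ (Z t)) := hL.continuous.comp hZc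
  set γ : ℝ → ℝ := fun t => ∫ s in (0:ℝ)..t, θ (Z s) with hγ
  have hγd : ∀ t, HasDerivAt γ (θ (Z t)) t := fun t =>
    intervalIntegral.integral_hasDerivAt_right (hg.intervalIntegrable _ _)
      (hg.stronglyMeasurableAtFilter _ _) hg.continuousAt
  have hγ0 : γ 0 = 0 := by simp [hγ]
  have hγc : Continuous γ := continuous_iff_continuousAt.2 fun t => (hγd t).continuousAt
  have hmono : Monotone γ := monotone_of_hasDerivAt_nonneg hγd (fun t => (hθ01 _).1)
  have hmono2 : Monotone (fun t => t - γ t) :=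
    monotone_of_hasDerivAt_nonneg (fun t => (hasDerivAt_id t).sub (hγd t))
      (fun t => sub_nonneg.2 (hθ01 _).2)
  have hnn : ∀ t, 0 ≤ t → 0 ≤ γ t := fun t ht => hγ0 ▸ hmono ht
  have hle : ∀ t, 0 ≤ t → γ t ≤ t := fun t ht => by
    have := hmono2 ht
    simp only [hγ0] at this
    linarith
  have key : ∀ t, 0 ≤ t → z t = y (γ t) := by
    intro T hT
    have := ODE_solution_unique (v := fun t u => θ (Z t) • v u) (K := K) (a := 0) (b := T)
      (f := Z) (g := Y ∘ γ) (fun t => by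
        apply LipschitzWith.of_dist_le_mul
        intro a b
        rw [dist_smul₀, Real.norm_of_nonneg (hθ01 _).1]
        exact (mul_le_of_le_one_left dist_nonneg (hθ01 _).2).trans (hK.dist_le_mul a b))
      hZc.continuousOn (fun t ht => (hZd t ht.1).hasDerivWithinAt)
      (hYc.comp hγc).continuousOn
      (fun t ht => ((hYd _ (hnn t ht.1)).scomp t (hγd t)).hasDerivWithinAt)
      (by simp [hγ0, hY0, hZ0])
    have h := this (right_mem_Icc.2 hT)
    rw [← hZz T hT, h, ← hYy _ (hnn T hT)]
    rfl
  refine ⟨γ, hmono.monotoneOn _, hγ0, fun t ht => ⟨hnn t ht, hle t ht, key t ht⟩, ?_⟩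
  rintro _ ⟨t, ht, rfl⟩
  exact ⟨γ t, hnn t ht, (key t ht).symm⟩
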